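/- arXiv:2504.11866 — 5 statements merged into one kernel-verified Lean document; each statement's English description precedes it below -/
import Mathlib

section
/- Let n ≥ 1 be an integer, let x_1,…,x_n ∈ [0,1] with average a := (Σ_{i=1}^n x_i)/n, and let b ∈ (0,1) satisfy a < b. Then Σ_{i : x_i < b} d(x_i, b) ≥ n·d(a,b), where the sum ranges over those indices i with x_i < b. -/
/-!
Write `a` for the average of the `x i`. The function `u ↦ klBer u b` is convex, and its tangent at
`a` is `L u = u * log (a / b) + (1 - u) * log ((1 - a) / (1 - b))`; the gap `klBer u b - L u` is
exactly `klBer u a`, so it is nonnegative by Gibbs' inequality. Since `a < b`, `L` is antitone, and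
`L b = -klBer b a ≤ 0`, so `L u ≤ 0` for `u ≥ b`. Hence replacing `klBer (x i) b` by `0` at the
indices with `b ≤ x i` still leaves an upper bound for `L (x i)`, and summing gives
`∑ L (x i) = n * L a = n * klBer a b`. The tangent does not exist at `a = 0`, but then every `x i`
vanishes and equality holds.
-/

open Finset

/-- Bernoulli Kullback–Leibler divergence (with the `0 · log 0 = 0` convention,
which holds automatically since `Real.log 0 = 0`). -/
noncomputable def klBer (x y : ℝ) : ℝ :=
  x * Real.log (x / y) + (1 - x) * Real.log ((1 - x) / (1 - y))

lemma sub_le_mul_log_div {u a : ℝ} (hu : 0 ≤ u) (ha : 0 < a) : u - a ≤ u * Real.log (u / a) := by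
  rcases hu.eq_or_lt with rfl | hu
  · simp [ha.le]
  · have h := Real.one_sub_inv_le_log_of_pos (div_pos hu ha)
    have h2 := mul_le_mul_of_nonneg_left h hu.le
    have h3 : u * (1 - (u / a)⁻¹) = u - a := by field_simp
    linarith

/-- Gibbs' inequality for Bernoulli distributions. -/
lemma klBer_nonneg {u a : ℝ} (hu : u ∈ Set.Icc (0 : ℝ) 1) (ha : a ∈ Set.Ioo (0 : ℝ) 1) :
    0 ≤ klBer u a := by
  have h1 := sub_le_mul_log_div hu.1 ha.1
  have h2 := sub_le_mul_log_div (sub_nonneg.2 hu.2) (sub_pos.2 ha.2)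
  unfold klBer
  linarith

lemma mul_log_div_split {u a b : ℝ} (ha : a ≠ 0) (hb : b ≠ 0) :
    u * Real.log (u / b) = u * Real.log (u / a) + u * Real.log (a / b) := by
  rcases eq_or_ne u 0 with rfl | hu
  · simp
  · rw [Real.log_div hu hb, Real.log_div hu ha, Real.log_div ha hb]
    ring

/-- The tangent at `a` of `u ↦ klBer u b` lies below `klBer u b` by exactly `klBer u a`. -/
lemma klBer_eq_add_tangent {a b : ℝ} (u : ℝ) (ha : a ∈ Set.Ioo (0 : ℝ) 1)
    (hb : b ∈ Set.Ioo (0 : ℝ) 1) :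
    klBer u b = klBer u a +
      (u * Real.log (a / b) + (1 - u) * Real.log ((1 - a) / (1 - b))) := by
  unfold klBer
  rw [mul_log_div_split (u := u) ha.1.ne' hb.1.ne',
    mul_log_div_split (u := 1 - u) (sub_pos.2 ha.2).ne' (sub_pos.2 hb.2).ne']
  ring

theorem sum_klBer_lt_ge {n : ℕ} (hn : 1 ≤ n) (x : Fin n → ℝ)
    (hx : ∀ i, x i ∈ Set.Icc (0 : ℝ) 1) (b : ℝ) (hb : b ∈ Set.Ioo (0 : ℝ) 1)
    (ha : (∑ i, x i) / n < b) :
    ∑ i ∈ univ.filter (fun i => x i < b), klBer (x i) b ≥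
      n * klBer ((∑ i, x i) / n) b := by
  have hn0 : (0 : ℝ) < n := by exact_mod_cast hn
  have hs0 : 0 ≤ ∑ i, x i := sum_nonneg fun i _ => (hx i).1
  rcases hs0.eq_or_lt with hs | hs
  · have hz : ∀ i, x i = 0 := fun i =>
      (sum_eq_zero_iff_of_nonneg fun i _ => (hx i).1).1 hs.symm i (mem_univ i)
    simp [hz, hb.1]
  · set a := (∑ i, x i) / n with ha_def
    have hsum : ∑ i, x i = n * a := by rw [ha_def]; field_simp
    have haI : a ∈ Set.Ioo (0 : ℝ) 1 := ⟨div_pos hs hn0, ha.trans hb.2⟩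
    have hA : Real.log (a / b) ≤ 0 :=
      Real.log_nonpos (div_pos haI.1 hb.1).le ((div_le_one hb.1).2 ha.le)
    have hB : 0 ≤ Real.log ((1 - a) / (1 - b)) :=
      Real.log_nonneg ((one_le_div (sub_pos.2 hb.2)).2 (by linarith))
    have hgap := fun u => klBer_eq_add_tangent u haI hb
    have htotal : n * klBer a b =
        ∑ i, (x i * Real.log (a / b) + (1 - x i) * Real.log ((1 - a) / (1 - b))) := by
      rw [sum_add_distrib, ← sum_mul, ← sum_mul, sum_sub_distrib, hsum]
      simp only [sum_const, card_univ, Fintype.card_fin, nsmul_eq_mul, klBer]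
      ring
    rw [ge_iff_le, htotal, sum_filter]
    refine sum_le_sum fun i _ => ?_
    split_ifs with h
    · have := klBer_nonneg (hx i) haI
      linarith [hgap (x i)]
    · have h1 := klBer_nonneg (Set.Ioo_subset_Icc_self hb) haI
      have h2 := hgap b
      have h3 : klBer b b = 0 := by
        simp [klBer, div_self hb.1.ne', div_self (sub_pos.2 hb.2).ne']
      have h4 : 0 ≤ x i - b := by linarith
      -- `L (x i) - L b` is the product of `x i - b` with the slope, which is nonpositive.
      nlinarith [mul_nonneg h4 (sub_nonneg.2 (hA.trans hB))]
end

section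
/- For every real β > 0 there exists a constant c > 0 such that for every positive integer n and every δ ∈ (0,1) with 1−δ ≥ (1+β)/n, one has d((1−δ)/2 + 1/(2n), 1−δ) ≥ c·((1−δ)/2 − 1/(2n)). -/
/-- One summand of the bound of the divergence by the squared Hellinger distance; it is
`log u ≥ 1 - 1/u` at `u = √(p/q)`. -/
lemma mul_log_div_ge {p q : ℝ} (hp : 0 < p) (hq : 0 < q) :
    p - q + (√p - √q) ^ 2 ≤ p * Real.log (p / q) := by
  obtain ⟨s, hs, rfl⟩ : ∃ s : ℝ, 0 < s ∧ p = s ^ 2 :=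
    ⟨√p, Real.sqrt_pos.2 hp, (Real.sq_sqrt hp.le).symm⟩
  obtain ⟨r, hr, rfl⟩ : ∃ r : ℝ, 0 < r ∧ q = r ^ 2 :=
    ⟨√q, Real.sqrt_pos.2 hq, (Real.sq_sqrt hq.le).symm⟩
  rw [Real.sqrt_sq hs.le, Real.sqrt_sq hr.le, ← div_pow, Real.log_pow]
  have h := Real.one_sub_inv_le_log_of_pos (div_pos hs hr)
  have h2 := mul_le_mul_of_nonneg_left h (by positivity : 0 ≤ 2 * s ^ 2)
  have h3 : 2 * s ^ 2 * (1 - (s / r)⁻¹) = 2 * s ^ 2 - 2 * s * r := by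
    field_simp
  push_cast
  linarith

/-- A relative form of Pinsker's inequality, sharper than the usual one when `y` is small. -/
lemma sq_div_le_klBer {x y : ℝ} (hx : 0 < x) (hxy : x ≤ y) (hy : y < 1) :
    (y - x) ^ 2 / (4 * y) ≤ klBer x y := by
  have hy0 : 0 < y := hx.trans_le hxy
  have h1 := mul_log_div_ge hx hy0
  have h2 := mul_log_div_ge (p := 1 - x) (q := 1 - y) (by linarith) (by linarith)
  have h3 : (y - x) ^ 2 / (4 * y) ≤ (√x - √y) ^ 2 := by
    rw [div_le_iff₀ (by positivity)]
    have hs : √x ≤ √y := Real.sqrt_le_sqrt hxy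
    have hs0 := Real.sqrt_nonneg x
    have e : (y - x) ^ 2 = (√x - √y) ^ 2 * (√x + √y) ^ 2 := by
      have : (√x - √y) * (√x + √y) = x - y := by
        linear_combination Real.sq_sqrt hx.le - Real.sq_sqrt hy0.le
      rw [← mul_pow, this]; ring
    rw [e]
    refine mul_le_mul_of_nonneg_left ?_ (sq_nonneg _)
    nlinarith [Real.sq_sqrt hy0.le]
  unfold klBer
  linarith [sq_nonneg (√(1 - x) - √(1 - y))]

theorem klBer_lower_bound_bai (β : ℝ) (hβ : 0 < β) :
    ∃ c > (0 : ℝ), ∀ n : ℕ, 0 < n → ∀ δ : ℝ, δ ∈ Set.Ioo (0 : ℝ) 1 →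
      (1 + β) / n ≤ 1 - δ →
      klBer ((1 - δ) / 2 + 1 / (2 * n)) (1 - δ) ≥ c * ((1 - δ) / 2 - 1 / (2 * n)) := by
  refine ⟨β / (8 * (1 + β)), by positivity, fun n hn δ hδ h => ?_⟩
  obtain ⟨y, hy⟩ : ∃ y, y = 1 - δ := ⟨_, rfl⟩
  obtain ⟨a, ha⟩ : ∃ a : ℝ, a = 1 / n := ⟨_, rfl⟩
  have hn' : (0 : ℝ) < n := by exact_mod_cast hn
  have ha0 : 0 < a := by rw [ha]; positivity
  have e1 : 1 / (2 * (n : ℝ)) = a / 2 := by rw [ha]; field_simp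
  have e2 : (1 + β) / n = (1 + β) * a := by rw [ha]; field_simp
  rw [e2, ← hy] at h
  rw [e1, ← hy]
  have hβa : 0 < β * a := mul_pos hβ ha0
  have hay : a ≤ y := by linarith
  have hy0 : 0 < y := by linarith
  refine le_trans ?_ (sq_div_le_klBer (by linarith) (by linarith) (by linarith [hδ.1]))
  have e3 : y - (y / 2 + a / 2) = y / 2 - a / 2 := by ring
  rw [e3, sq, mul_div_right_comm]
  refine mul_le_mul_of_nonneg_right ?_ (by linarith)
  rw [div_le_div_iff₀ (by positivity) (by positivity)]
  linarith
end

section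
/- For all real numbers a, b with 0 < a < b < 1, setting r := (b−a)/a, one has d(b,a) ≥ (1 − 1/(1 + r/(2+r)))·b·log(b/a). -/
theorem klBer_ge_frac_mul_log {a b : ℝ} (ha : 0 < a) (hab : a < b) (hb : b < 1) :
    klBer b a ≥ (1 - 1 / (1 + ((b - a) / a) / (2 + (b - a) / a))) * (b * Real.log (b / a)) := by
  have hb0 : 0 < b := ha.trans hab
  have hsum : 0 < a + b := by linarith
  have h1b : 0 < 1 - b := by linarith
  have h1a : 0 < 1 - a := by linarith
  have hcoef : (1 - 1 / (1 + ((b - a) / a) / (2 + (b - a) / a))) * (b * Real.log (b / a))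
      = (b - a) / 2 * Real.log (b / a) := by
    have h2 : 2 + (b - a) / a = (a + b) / a := by field_simp; ring
    have h3 : 1 + ((b - a) / a) / (2 + (b - a) / a) = 2 * b / (a + b) := by
      rw [h2]; field_simp; ring
    rw [h3]; field_simp; ring
  have hlog : 2 * (b - a) / (a + b) ≤ Real.log (b / a) := by
    have h := Real.le_log_one_add_of_nonneg (x := (b - a) / a)
      (div_nonneg (by linarith) ha.le)
    have e1 : 1 + (b - a) / a = b / a := by field_simp; ring
    have e2 : 2 * ((b - a) / a) / ((b - a) / a + 2) = 2 * (b - a) / (a + b) := by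
      have h2 : (b - a) / a + 2 = (a + b) / a := by field_simp; ring
      rw [h2]; field_simp
    rwa [e1, e2] at h
  have hmain : b - a ≤ (a + b) / 2 * Real.log (b / a) := by
    rw [div_le_iff₀ hsum] at hlog
    linarith
  have hneg : -(b - a) ≤ (1 - b) * Real.log ((1 - b) / (1 - a)) := by
    have h := mul_le_mul_of_nonneg_left
      (Real.one_sub_inv_le_log_of_pos (div_pos h1b h1a)) h1b.le
    have e : (1 - b) * (1 - ((1 - b) / (1 - a))⁻¹) = -(b - a) := by field_simp; ring
    rwa [e] at h
  rw [ge_iff_le, hcoef, klBer]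
  linarith
end

section
/- For every real number ε with 0 ≤ ε ≤ 1/8, one has d(1/2, 1/2 + 2ε) ≤ 12ε². -/
theorem klBer_half_le {ε : ℝ} (h0 : 0 ≤ ε) (h1 : ε ≤ 1 / 8) :
    klBer (1 / 2) (1 / 2 + 2 * ε) ≤ 12 * ε ^ 2 := by
  have hsq : ε ^ 2 ≤ 1 / 64 := by nlinarith
  have hp : 0 < 1 - 16 * ε ^ 2 := by linarith
  have ha : (0 : ℝ) < 1 / 2 + 2 * ε := by linarith
  have hb : (0 : ℝ) < 1 - (1 / 2 + 2 * ε) := by linarith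
  have key : klBer (1 / 2) (1 / 2 + 2 * ε) = 1 / 2 * Real.log (1 / (1 - 16 * ε ^ 2)) := by
    have hprod : 1 / (1 - 16 * ε ^ 2)
        = (1 / 2) / (1 / 2 + 2 * ε) * ((1 - 1 / 2) / (1 - (1 / 2 + 2 * ε))) := by
      rw [div_mul_div_comm, div_eq_div_iff hp.ne' (mul_pos ha hb).ne']
      ring
    rw [hprod, Real.log_mul (by positivity) (div_pos (by norm_num) hb).ne', klBer]
    ring
  -- `log u ≤ u - 1` at `u = 1 / (1 - 16 ε²)`; the bound `ε² ≤ 1/64` keeps `1 - 16 ε² ≥ 3/4`.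
  have hlog := Real.log_le_sub_one_of_pos (one_div_pos.mpr hp)
  have hle : 1 / (1 - 16 * ε ^ 2) ≤ 1 + 24 * ε ^ 2 := by
    rw [div_le_iff₀ hp]
    nlinarith [mul_nonneg (sq_nonneg ε) (sub_nonneg.mpr hsq)]
  rw [key]
  linarith
end

section
/- Let n and m be integers with n ≥ 2 and 1 ≤ m ≤ n−1, let β ∈ (0,1), and let δ be a real number with 0 < δ ≤ (n−m)(1−β)/n. Then d((m−(1−δ))/(n−1), 1−δ) ≥ (β·(n−m−δ)/(2(n−1)))·log((n−m−δ)/((n−1)·δ)). -/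
/-- The bound for Bernoulli laws described by their failure probabilities `p` and `δ`. -/
lemma klBer_one_sub_ge {p δ β : ℝ} (hp1 : p < 1) (hδ : 0 < δ)
    (hβ0 : 0 < β) (hβ1 : β < 1) (h : δ ≤ (1 - β) * p) :
    β / 2 * (p * Real.log (p / δ)) ≤ klBer (1 - p) (1 - δ) := by
  have hp : 0 < p := by nlinarith
  have hδp : δ ≤ p := by nlinarith
  have h1 : δ - p ≤ (1 - p) * Real.log ((1 - p) / (1 - δ)) := by
    have hq : 0 < 1 - p := by linarith
    have hd : 0 < 1 - δ := by linarith
    have := Real.one_sub_inv_le_log_of_pos (div_pos hq hd)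
    calc δ - p = (1 - p) * (1 - ((1 - p) / (1 - δ))⁻¹) := by field_simp; ring
      _ ≤ _ := by gcongr
  have h2 : 2 * (p - δ) ≤ (p + δ) * Real.log (p / δ) := by
    have hx : 0 ≤ p / δ - 1 := by
      rw [sub_nonneg, le_div_iff₀ hδ]; linarith
    have := Real.le_log_one_add_of_nonneg hx
    rw [add_sub_cancel] at this
    calc 2 * (p - δ) = (p + δ) * (2 * (p / δ - 1) / (p / δ - 1 + 2)) := by
          have : p / δ - 1 + 2 = (p + δ) / δ := by field_simp; ring
          rw [this]; field_simp
      _ ≤ _ := by gcongr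
  have hl : 0 ≤ Real.log (p / δ) := Real.log_nonneg (by rw [le_div_iff₀ hδ]; linarith)
  have h3 : 0 ≤ ((1 - β) * p - δ) * Real.log (p / δ) := mul_nonneg (by linarith) hl
  unfold klBer
  rw [sub_sub_cancel, sub_sub_cancel]
  nlinarith

theorem klBer_bar_lower_bound (n m : ℤ) (hn : 2 ≤ n) (hm1 : 1 ≤ m) (hm2 : m ≤ n - 1)
    (β : ℝ) (hβ : β ∈ Set.Ioo (0 : ℝ) 1) (δ : ℝ) (hδ0 : 0 < δ)
    (hδ : δ ≤ (n - m) * (1 - β) / n) :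
    klBer ((m - (1 - δ)) / (n - 1)) (1 - δ) ≥
      β * (n - m - δ) / (2 * (n - 1)) * Real.log ((n - m - δ) / ((n - 1) * δ)) := by
  obtain ⟨hβ0, hβ1⟩ := hβ
  have hn' : (2 : ℝ) ≤ n := by exact_mod_cast hn
  have hm' : (1 : ℝ) ≤ m := by exact_mod_cast hm1
  have hN : (0 : ℝ) < n - 1 := by linarith
  rw [le_div_iff₀ (by linarith)] at hδ
  have hp1 : ((n : ℝ) - m - δ) / (n - 1) < 1 := by
    rw [div_lt_one hN]; linarith
  have h : δ ≤ (1 - β) * (((n : ℝ) - m - δ) / (n - 1)) := by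
    rw [← mul_div_assoc, le_div_iff₀ hN]
    nlinarith
  have key := klBer_one_sub_ge hp1 hδ0 hβ0 hβ1 h
  have e1 : 1 - ((n : ℝ) - m - δ) / (n - 1) = (m - (1 - δ)) / (n - 1) := by
    field_simp; ring
  rw [e1, div_div] at key
  calc _ = β / 2 * (((n : ℝ) - m - δ) / (n - 1) *
        Real.log ((n - m - δ) / ((n - 1) * δ))) := by field_simp
    _ ≤ _ := key
end
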